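/- Let s ≥ 2 and n ≥ 1 be integers. For every assignment of weights λ = (λ_{ij})_{(i,j) ∈ [2n]×[s]} to the vertices of the blown-up cycle C_{2n}[K_s] with λ_{ij} ∈ R(s) for all (i,j), the multivariate independence polynomial satisfies Z_{C_{2n}[K_s],λ} ≠ 0. -/

import Mathlib

attribute [local instance] Classical.propDecidable

/-- Multivariate independence polynomial of the induced subgraph `G[W]`:
the sum over all independent sets `S ⊆ W` of `∏ v ∈ S, lam v`. -/
noncomputable def indepPolyOn {V : Type*} [Fintype V] (G : SimpleGraph V)
    (lam : V → ℂ) (W : Finset V) : ℂ :=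
  ∑ S ∈ W.powerset, if (∀ u ∈ S, ∀ v ∈ S, ¬ G.Adj u v) then ∏ v ∈ S, lam v else 0

/-- Multivariate independence polynomial `Z_{G,λ}`. -/
noncomputable def indepPoly {V : Type*} [Fintype V] (G : SimpleGraph V)
    (lam : V → ℂ) : ℂ :=
  indepPolyOn G lam Finset.univ

/-- The subdivided claw `S_{t,t,t}`: three paths of length `t` sharing one common
endpoint (the vertex `none`). -/
def subdividedClaw (t : ℕ) : SimpleGraph (Option (Fin 3 × Fin t)) :=
  SimpleGraph.fromRel (fun a b =>
    match a, b with
    | none, some (_, j) => (j : ℕ) = 0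
    | some (i, j), some (i', j') => i = i' ∧ (j : ℕ) + 1 = (j' : ℕ)
    | _, _ => False)

/-- The open parabolic region `R(k) = {z : (Im z)² < (1/k)·Re z + 1/(4k²)}`. -/
def parabR (k : ℝ) : Set ℂ := {z : ℂ | z.im ^ 2 < z.re / k + 1 / (4 * k ^ 2)}

/-- The closed halfplane `H(t) = {z : Re z ≥ t}`. -/
def halfH (t : ℝ) : Set ℂ := {z : ℂ | t ≤ z.re}


/-- The blown-up cycle `C_m[K_s]`: vertex set `[m] × [s]`; `(i,j)` and `(i',j')`
are adjacent iff `i = i'` and `j ≠ j'`, or `i' − i ≡ ±1 (mod m)`. -/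
def blowCyc (m s : ℕ) : SimpleGraph (Fin m × Fin s) :=
  SimpleGraph.fromRel (fun a b =>
    (a.1 = b.1 ∧ a.2 ≠ b.2) ∨ ((a.1 : ℕ) + 1) % m = (b.1 : ℕ))

/-! Expanding along the clique of each layer shows that `Z` depends only on the layer sums `x k` of
the weights, and equals the trace of the product `M` of the transfer matrices `!![1, x k; 1, 0]`
around the cycle. The sum of `s` elements of `R(s)` lies in `R(1) = {x | ‖x‖ < Re x + 1/2}`, and for
`x` in `R(1)` the transfer matrix acts on the ratio `t = q / p` of a vector `(p, q)` by
`t ↦ (1 + x t)⁻¹`, which maps the closed unit disc about `1` into its interior. So `M * M` maps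
`t = 0`, a boundary point of this disc, into the open disc, which does not contain `0`: the lower
left entry of `M * M` does not vanish. That entry is `M 1 0 * M.trace`. -/

open Finset
open scoped Matrix

section IndependencePolynomial

variable {V : Type*} [Fintype V] (G : SimpleGraph V) (lam : V → ℂ)

lemma indepPolyOn_eq_sum_ite_isIndepSet (W : Finset V) :
    indepPolyOn G lam W =
      ∑ S ∈ W.powerset, if G.IsIndepSet (S : Set V) then ∏ v ∈ S, lam v else 0 := by
  have isIndepSet_iff (S : Finset V) :
      (∀ u ∈ S, ∀ v ∈ S, ¬ G.Adj u v) ↔ G.IsIndepSet (S : Set V) :=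
    ⟨fun h u hu v hv _ => h u hu v hv, fun h u hu v hv huv => h hu hv huv.ne huv⟩
  simp only [indepPolyOn, isIndepSet_iff]

@[simp]
lemma indepPolyOn_empty : indepPolyOn G lam ∅ = 1 := by
  simp [indepPolyOn]

lemma indepPolyOn_insert [DecidableEq V] {v : V} {W : Finset V} (hv : v ∉ W) :
    indepPolyOn G lam (insert v W) =
      indepPolyOn G lam W + lam v * indepPolyOn G lam {u ∈ W | ¬ G.Adj v u} := by
  have : Std.Symm fun u w => ¬ G.Adj u w := ⟨fun _ _ h h' => h h'.symm⟩
  have isIndepSet_insert {S : Finset V} (hS : S ∈ W.powerset) :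
      G.IsIndepSet (insert v S : Finset V) ↔
        S ⊆ ({u ∈ W | ¬ G.Adj v u} : Finset V) ∧ G.IsIndepSet (S : Set V) := by
    have hvS : v ∉ (S : Set V) := fun h => hv (mem_powerset.1 hS h)
    have hsub : S ⊆ ({u ∈ W | ¬ G.Adj v u} : Finset V) ↔ ∀ u ∈ S, ¬ G.Adj v u :=
      ⟨fun h u hu => (mem_filter.1 (h hu)).2,
        fun h u hu => mem_filter.2 ⟨mem_powerset.1 hS hu, h u hu⟩⟩
    rw [coe_insert, SimpleGraph.IsIndepSet,
      Set.pairwise_insert_of_symm_of_notMem hvS, hsub, and_comm]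
    rfl
  simp only [indepPolyOn_eq_sum_ite_isIndepSet]
  rw [sum_powerset_insert hv, mul_sum]
  congr 1
  have hsub : ({u ∈ W | ¬ G.Adj v u} : Finset V).powerset ⊆ W.powerset :=
    powerset_mono.2 (filter_subset _ _)
  refine (sum_subset_zero_on_sdiff hsub (fun S hS => ?_) fun S hS => ?_).symm
  · obtain ⟨hSW, hSN⟩ := mem_sdiff.1 hS
    exact if_neg fun h => hSN (mem_powerset.2 ((isIndepSet_insert hSW).1 h).1)
  · have hvS : v ∉ S := fun h => hv (mem_powerset.1 (hsub hS) h)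
    simp only [isIndepSet_insert (hsub hS), mem_powerset.1 hS, true_and, prod_insert hvS,
      mul_ite, mul_zero]

/-- An independent set contains at most one vertex of the clique `K`. -/
lemma indepPolyOn_union_isClique [DecidableEq V] {K W W' : Finset V} (hK : G.IsClique (K : Set V))
    (hKW : Disjoint K W) (hW' : ∀ v ∈ K, ({u ∈ W | ¬ G.Adj v u} : Finset V) = W') :
    indepPolyOn G lam (K ∪ W) =
      indepPolyOn G lam W + (∑ v ∈ K, lam v) * indepPolyOn G lam W' := by
  induction K using Finset.induction_on with
  | empty => simp
  | insert v K hvK ih =>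
    rw [coe_insert, SimpleGraph.isClique_insert_of_notMem (mem_coe.not.2 hvK)] at hK
    rw [disjoint_insert_left] at hKW
    have nonadj : ({u ∈ K ∪ W | ¬ G.Adj v u} : Finset V) = W' := by
      rw [filter_union, filter_false_of_mem fun u hu => not_not.2 (hK.2 u hu), empty_union,
        hW' v (mem_insert_self v K)]
    have hv : v ∉ K ∪ W := by simp [hvK, hKW.1]
    rw [insert_union, indepPolyOn_insert G lam hv, nonadj,
      ih hK.1 hKW.2 fun u hu => hW' u (mem_insert_of_mem hu), sum_insert hvK]
    ring

end IndependencePolynomial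

section ParabolicRegion

lemma mem_parabR_iff {k : ℝ} (hk : 0 < k) {z : ℂ} :
    z ∈ parabR k ↔ ‖z‖ < z.re + 1 / (2 * k) := by
  have hsq : (z.re + 1 / (2 * k)) ^ 2 - ‖z‖ ^ 2 = z.re / k + 1 / (4 * k ^ 2) - z.im ^ 2 := by
    rw [Complex.sq_norm, Complex.normSq_apply]
    field_simp
    ring
  constructor
  · intro hz
    have hz' : z.im ^ 2 < z.re / k + 1 / (4 * k ^ 2) := hz
    have hpos : 0 < z.re + 1 / (2 * k) := by
      have hfac : z.re / k + 1 / (4 * k ^ 2) = (z.re + 1 / (4 * k)) / k := by field_simp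
      have hre : 0 < z.re + 1 / (4 * k) := by
        have hquot := (sq_nonneg z.im).trans_lt hz'
        rwa [hfac, div_pos_iff_of_pos_right hk] at hquot
      have hle : 1 / (4 * k) ≤ 1 / (2 * k) := by gcongr; norm_num
      linarith
    exact lt_of_pow_lt_pow_left₀ 2 hpos.le (by linarith)
  · intro hz
    have hlt := pow_lt_pow_left₀ hz (norm_nonneg z) two_ne_zero
    change z.im ^ 2 < z.re / k + 1 / (4 * k ^ 2)
    linarith

lemma sum_mem_parabR {ι : Type*} {t : Finset ι} {f : ι → ℂ} {k : ℝ} (hk : 0 < k)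
    (hf : ∀ i ∈ t, f i ∈ parabR (#t * k)) : ∑ i ∈ t, f i ∈ parabR k := by
  rw [mem_parabR_iff hk]
  rcases t.eq_empty_or_nonempty with rfl | ht
  · simpa using hk
  have hcard : (0 : ℝ) < #t := Nat.cast_pos.2 ht.card_pos
  calc ‖∑ i ∈ t, f i‖ ≤ ∑ i ∈ t, ‖f i‖ := norm_sum_le _ _
    _ < ∑ i ∈ t, ((f i).re + 1 / (2 * (#t * k))) :=
      sum_lt_sum_of_nonempty ht fun i hi => (mem_parabR_iff (mul_pos hcard hk)).1 (hf i hi)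
    _ = (∑ i ∈ t, f i).re + 1 / (2 * k) := by
      rw [sum_add_distrib, sum_const, nsmul_eq_mul, Complex.re_sum]
      field_simp

lemma norm_lt_norm_one_add {w : ℂ} (hw : -(1 / 2) < w.re) : ‖w‖ < ‖1 + w‖ := by
  refine lt_of_pow_lt_pow_left₀ 2 (norm_nonneg _) ?_
  simp only [Complex.sq_norm, Complex.normSq_apply, Complex.add_re, Complex.add_im,
    Complex.one_re, Complex.one_im]
  linarith

lemma neg_half_lt_re_mul {x t : ℂ} (hx : x ∈ parabR 1) (ht : ‖t - 1‖ ≤ 1) :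
    -(1 / 2) < (x * t).re := by
  have hnorm : ‖x‖ < x.re + 1 / 2 := by simpa using (mem_parabR_iff one_pos).1 hx
  have hdev : -‖x‖ ≤ (x * (t - 1)).re := calc
    -‖x‖ ≤ -‖x * (t - 1)‖ := by
      rw [norm_mul]
      exact neg_le_neg (mul_le_of_le_one_right (norm_nonneg x) ht)
    _ ≤ (x * (t - 1)).re := (abs_le.1 (Complex.abs_re_le_norm _)).1
  have hsplit : (x * t).re = x.re + (x * (t - 1)).re := by
    rw [← Complex.add_re]
    ring_nf
  linarith

end ParabolicRegion

section TransferMatrix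

/-- The transfer matrix of one layer of total weight `x`: it maps `(Z k, Z (k - 1))` to
`(Z (k + 1), Z k)` when `Z (k + 1) = Z k + x * Z (k - 1)`, which is the recursion satisfied by the
independence polynomials of a blown-up path with `k` layers. -/
def transferMatrix (x : ℂ) : Matrix (Fin 2) (Fin 2) ℂ := !![1, x; 1, 0]

lemma transferMatrix_mulVec (x : ℂ) (v : Fin 2 → ℂ) :
    transferMatrix x *ᵥ v = ![v 0 + x * v 1, v 0] := by
  ext i
  fin_cases i <;> simp [transferMatrix, Matrix.mulVec, dotProduct, Fin.sum_univ_two]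

/-- The product of the transfer matrices of the first layers; later layers act on the left. -/
def transferProd (x : ℕ → ℂ) : ℕ → Matrix (Fin 2) (Fin 2) ℂ
  | 0 => 1
  | k + 1 => transferMatrix (x k) * transferProd x k

/-- The vectors `(p, q)` whose ratio `q / p` lies in the closed unit disc about `1`, with the
denominator cleared. -/
def closedDiscCone : Set (Fin 2 → ℂ) := {v | v 0 ≠ 0 ∧ ‖v 1 - v 0‖ ≤ ‖v 0‖}

/-- The vectors `(p, q)` whose ratio `q / p` lies in the open unit disc about `1`, with the
denominator cleared; the strict inequality forces `p ≠ 0`. -/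
def openDiscCone : Set (Fin 2 → ℂ) := {v | ‖v 1 - v 0‖ < ‖v 0‖}

lemma openDiscCone_subset_closedDiscCone : openDiscCone ⊆ closedDiscCone := fun _ hv =>
  ⟨norm_pos_iff.1 ((norm_nonneg _).trans_lt hv), le_of_lt hv⟩

lemma apply_one_ne_zero_of_mem_openDiscCone {v : Fin 2 → ℂ} (hv : v ∈ openDiscCone) :
    v 1 ≠ 0 := by
  intro h
  simp [openDiscCone, h] at hv

/-- With `t = q / p`, the claim is `‖x t‖ < ‖1 + x t‖`, that is `-1/2 < Re (x t)`. -/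
lemma mapsTo_transferMatrix {x : ℂ} (hx : x ∈ parabR 1) :
    Set.MapsTo (transferMatrix x *ᵥ ·) closedDiscCone openDiscCone := by
  rintro v ⟨hp, hpq⟩
  obtain ⟨t, ht⟩ : ∃ t, v 1 = v 0 * t := ⟨v 1 / v 0, (mul_div_cancel₀ _ hp).symm⟩
  have ht_disc : ‖t - 1‖ ≤ 1 := by
    rw [ht, ← mul_sub_one, norm_mul] at hpq
    exact (mul_le_iff_le_one_right (norm_pos_iff.2 hp)).1 hpq
  have hlt : ‖v 0 * (x * t)‖ < ‖v 0 * (1 + x * t)‖ := by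
    rw [norm_mul (v 0), norm_mul (v 0)]
    exact mul_lt_mul_of_pos_left (norm_lt_norm_one_add (neg_half_lt_re_mul hx ht_disc))
      (norm_pos_iff.2 hp)
  have hsum : v 0 + x * v 1 = v 0 * (1 + x * t) := by
    rw [ht]
    ring
  have hdiff : v 0 - v 0 * (1 + x * t) = -(v 0 * (x * t)) := by ring
  simpa only [openDiscCone, Set.mem_ofPred_eq, transferMatrix_mulVec, Matrix.cons_val_zero,
    Matrix.cons_val_one, hsum, hdiff, norm_neg] using hlt

lemma mapsTo_mul_mulVec {A B : Matrix (Fin 2) (Fin 2) ℂ}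
    (hA : Set.MapsTo (A *ᵥ ·) closedDiscCone openDiscCone)
    (hB : Set.MapsTo (B *ᵥ ·) closedDiscCone openDiscCone) :
    Set.MapsTo ((A * B) *ᵥ ·) closedDiscCone openDiscCone := by
  intro v hv
  simpa only [Matrix.mulVec_mulVec] using hA (openDiscCone_subset_closedDiscCone (hB hv))

lemma mapsTo_transferProd {x : ℕ → ℂ} {n : ℕ} (hn : 1 ≤ n)
    (hx : ∀ k < n, x k ∈ parabR 1) :
    Set.MapsTo (transferProd x n *ᵥ ·) closedDiscCone openDiscCone := by
  induction n, hn using Nat.le_induction with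
  | base => simpa [transferProd] using mapsTo_transferMatrix (hx 0 one_pos)
  | succ n _ ih =>
    exact mapsTo_mul_mulVec (mapsTo_transferMatrix (hx n n.lt_succ_self))
      (ih fun k hk => hx k (hk.trans n.lt_succ_self))

lemma trace_ne_zero_of_mapsTo {M : Matrix (Fin 2) (Fin 2) ℂ}
    (hM : Set.MapsTo (M *ᵥ ·) closedDiscCone openDiscCone) : M.trace ≠ 0 := by
  have he : ![1, 0] ∈ closedDiscCone := by simp [closedDiscCone]
  have hne : ((M * M) *ᵥ ![1, 0]) 1 ≠ 0 :=
    apply_one_ne_zero_of_mem_openDiscCone (mapsTo_mul_mulVec hM hM he)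
  have hentry : ((M * M) *ᵥ ![1, 0]) 1 = M 1 0 * M.trace := by
    simp only [Matrix.mulVec, dotProduct, Matrix.mul_apply, Fin.sum_univ_two,
      Matrix.cons_val_zero, Matrix.cons_val_one, Matrix.trace_fin_two]
    ring
  exact right_ne_zero_of_mul (hentry ▸ hne)

end TransferMatrix

section BlownUpCycle

variable {m s : ℕ}

/-- The vertices of `C_m[K_s]` in the layers `a, …, b - 1`. The bounds need not be less than `m`:
there are no vertices in the layers from `m` on. -/
def layers (m s a b : ℕ) : Finset (Fin m × Fin s) := {v | a ≤ (v.1 : ℕ) ∧ (v.1 : ℕ) < b}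

/-- The total weight of layer `k`, the only way in which the weights of that layer enter the
independence polynomial. -/
def layerWeight (lam : Fin m × Fin s → ℂ) (k : ℕ) : ℂ := ∑ v ∈ layers m s k (k + 1), lam v

lemma mem_layers {a b : ℕ} {v : Fin m × Fin s} :
    v ∈ layers m s a b ↔ a ≤ (v.1 : ℕ) ∧ (v.1 : ℕ) < b := by
  simp [layers]

lemma layers_eq_empty {a b : ℕ} (h : b ≤ a) : layers m s a b = ∅ :=
  filter_eq_empty_iff.2 fun _ _ hv => (hv.1.trans_lt hv.2).not_ge h

lemma layers_union_layers {a b c : ℕ} (hab : a ≤ b) (hbc : b ≤ c) :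
    layers m s a b ∪ layers m s b c = layers m s a c := by
  ext v
  simp only [mem_union, mem_layers]
  omega

lemma disjoint_layers {a b c : ℕ} : Disjoint (layers m s a b) (layers m s b c) :=
  disjoint_left.2 fun _ hv hv' => (mem_layers.1 hv).2.not_ge (mem_layers.1 hv').1

lemma layers_zero_self : layers m s 0 m = univ := by
  ext v
  simp [mem_layers]

lemma layerWeight_coe (lam : Fin m × Fin s → ℂ) (i : Fin m) :
    layerWeight lam i = ∑ j, lam (i, j) := by
  have hlayer : layers m s i (i + 1) = ({i} : Finset (Fin m)) ×ˢ univ := by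
    ext v
    simp only [mem_layers, mem_product, mem_singleton, mem_univ, and_true, Fin.ext_iff]
    omega
  rw [layerWeight, hlayer, sum_product, sum_singleton]

lemma blowCyc_adj_of_fst_eq {u v : Fin m × Fin s} (h : u.1 = v.1) (huv : u ≠ v) :
    (blowCyc m s).Adj u v :=
  (SimpleGraph.fromRel_adj _ _ _).2 ⟨huv, Or.inl (Or.inl ⟨h, fun h' => huv (Prod.ext h h')⟩)⟩

lemma blowCyc_adj_iff_of_fst_ne {u v : Fin m × Fin s} (h : u.1 ≠ v.1) :
    (blowCyc m s).Adj u v ↔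
      (u.1 : ℕ) + 1 = v.1 ∨ (v.1 : ℕ) + 1 = u.1 ∨
        ((u.1 : ℕ) = 0 ∧ (v.1 : ℕ) + 1 = m) ∨ ((v.1 : ℕ) = 0 ∧ (u.1 : ℕ) + 1 = m) := by
  have succ_mod_eq_iff (i k : Fin m) :
      ((i : ℕ) + 1) % m = k ↔ (i : ℕ) + 1 = k ∨ ((k : ℕ) = 0 ∧ (i : ℕ) + 1 = m) := by
    rcases (Nat.succ_le_of_lt i.2).lt_or_eq with hi | hi
    · rw [Nat.mod_eq_of_lt hi]
      omega
    · rw [show (i : ℕ) + 1 = m from hi, Nat.mod_self]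
      omega
  have huv : u ≠ v := fun h' => h (congrArg Prod.fst h')
  simp only [blowCyc, SimpleGraph.fromRel_adj, huv, h, h.symm, succ_mod_eq_iff, ne_eq,
    not_false_eq_true, true_and, false_and, false_or]
  tauto

lemma isClique_layers_succ (k : ℕ) :
    (blowCyc m s).IsClique (layers m s k (k + 1) : Set (Fin m × Fin s)) := by
  intro u hu v hv huv
  rw [mem_coe, mem_layers] at hu hv
  exact blowCyc_adj_of_fst_eq (by omega) huv

lemma indepPolyOn_layers_add_two (lam : Fin m × Fin s → ℂ) {a k : ℕ} (ha : 1 ≤ a)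
    (hak : a ≤ k + 1) :
    indepPolyOn (blowCyc m s) lam (layers m s a (k + 2)) =
      indepPolyOn (blowCyc m s) lam (layers m s a (k + 1)) +
        layerWeight lam (k + 1) * indepPolyOn (blowCyc m s) lam (layers m s a k) := by
  rw [← layers_union_layers hak (k + 1).le_succ, union_comm, layerWeight]
  refine indepPolyOn_union_isClique _ lam (isClique_layers_succ _) disjoint_layers.symm
    fun v hv => ?_
  ext u
  rw [mem_layers] at hv
  rw [mem_filter, mem_layers, mem_layers,
    and_congr_right fun hu => not_congr (blowCyc_adj_iff_of_fst_ne (by omega))]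
  omega

lemma indepPoly_blowCyc (hm : 1 ≤ m) (lam : Fin m × Fin s → ℂ) :
    indepPoly (blowCyc m s) lam =
      indepPolyOn (blowCyc m s) lam (layers m s 1 m) +
        layerWeight lam 0 * indepPolyOn (blowCyc m s) lam (layers m s 2 (m - 1)) := by
  rw [indepPoly, ← layers_zero_self, ← layers_union_layers zero_le_one hm, layerWeight]
  refine indepPolyOn_union_isClique _ lam (isClique_layers_succ 0) disjoint_layers
    fun v hv => ?_
  ext u
  rw [mem_layers] at hv
  rw [mem_filter, mem_layers, mem_layers,
    and_congr_right fun hu => not_congr (blowCyc_adj_iff_of_fst_ne (by omega))]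
  omega

lemma transferProd_layerWeight_add_two (lam : Fin m × Fin s → ℂ) (k : ℕ) :
    transferProd (layerWeight lam) (k + 2) =
      !![indepPolyOn (blowCyc m s) lam (layers m s 1 (k + 2)),
          layerWeight lam 0 * indepPolyOn (blowCyc m s) lam (layers m s 2 (k + 2));
        indepPolyOn (blowCyc m s) lam (layers m s 1 (k + 1)),
          layerWeight lam 0 * indepPolyOn (blowCyc m s) lam (layers m s 2 (k + 1))] := by
  induction k with
  | zero =>
    rw [indepPolyOn_layers_add_two lam le_rfl le_rfl]
    simp [transferProd, transferMatrix, layers_eq_empty]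
  | succ k ih =>
    rw [transferProd, ih, indepPolyOn_layers_add_two lam le_rfl (by omega : 1 ≤ k + 1 + 1),
      indepPolyOn_layers_add_two lam one_le_two (by omega : 2 ≤ k + 1 + 1), transferMatrix,
      Matrix.mul_fin_two]
    simp only [one_mul, zero_mul, add_zero, mul_add, mul_left_comm]

lemma indepPoly_blowCyc_eq_trace (hm : 2 ≤ m) (lam : Fin m × Fin s → ℂ) :
    indepPoly (blowCyc m s) lam = (transferProd (layerWeight lam) m).trace := by
  obtain ⟨k, rfl⟩ := Nat.exists_eq_add_of_le' hm
  rw [indepPoly_blowCyc (one_le_two.trans hm), transferProd_layerWeight_add_two,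
    Matrix.trace_fin_two_of]
  rfl

end BlownUpCycle

theorem stmt11_general {m s : ℕ} (hm : 2 ≤ m) (lam : Fin m × Fin s → ℂ)
    (hlam : ∀ i, ∑ j, lam (i, j) ∈ parabR 1) : indepPoly (blowCyc m s) lam ≠ 0 := by
  have layerWeight_mem : ∀ k < m, layerWeight lam k ∈ parabR 1 := fun k hk =>
    layerWeight_coe lam ⟨k, hk⟩ ▸ hlam ⟨k, hk⟩
  rw [indepPoly_blowCyc_eq_trace hm]
  exact trace_ne_zero_of_mapsTo (mapsTo_transferProd (one_le_two.trans hm) layerWeight_mem)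

/-- `R(s)` is a multivariate zero-free region for the blown-up
cycle `C_{2n}[K_s]`. -/
theorem stmt11 (s n : ℕ) (hs : 2 ≤ s) (hn : 1 ≤ n)
    (lam : Fin (2 * n) × Fin s → ℂ) (hlam : ∀ v, lam v ∈ parabR s) :
    indepPoly (blowCyc (2 * n) s) lam ≠ 0 :=
  stmt11_general (by omega) lam fun i =>
    sum_mem_parabR one_pos fun j _ => by simpa using hlam (i, j)
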